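/- Let v1,...,v8 ∈ ℝ³ and let V be the 3×8 matrix with columns v1,...,v8. Let p lie in the convex hull of {v1,...,v8} and assume that every entry of V − p·(1,...,1) is nonzero and that the sign of the k-th coordinate of v_i − p equals s_{k,i}, where the sign matrix s is: row 1 = (+,+,+,+,−,−,−,−), row 2 = (+,+,−,−,+,+,−,−), row 3 = (+,−,−,+,+,−,−,+). Then the 8×8 matrix M(p) whose rows are: (1,1,1,1,1,1,1,1); the three rows of V; the three rows of Δ(p); and the row d(p)ᵀ = (d1, −d2, d3, −d4, −d5, d6, −d7, d8), is such that the linear system M(p)φ = (1, p1, p2, p3, 0, 0, 0, 0) has a unique solution φ ∈ ℝ⁸, and this solution is componentwise nonnegative. -/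

import Mathlib

open Matrix

/-- Sign pattern of the entries of `V - p` assumed in the hexahedron theorem:
row 1 = (+,+,+,+,-,-,-,-), row 2 = (+,+,-,-,+,+,-,-), row 3 = (+,-,-,+,+,-,-,+). -/
def hexSign : Matrix (Fin 3) (Fin 8) ℝ :=
  !![1, 1, 1, 1, -1, -1, -1, -1;
     1, 1, -1, -1, 1, 1, -1, -1;
     1, -1, -1, 1, 1, -1, -1, 1]

/-- Partial distance `δ_i(p)` in the coordinate plane omitting coordinate `k`:
the distance between the projections of `v i` and `p` onto that plane. -/
noncomputable def partialDist (v : Fin 8 → EuclideanSpace ℝ (Fin 3))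
    (p : EuclideanSpace ℝ (Fin 3)) (k1 k2 : Fin 3) (i : Fin 8) : ℝ :=
  Real.sqrt ((v i k1 - p k1) ^ 2 + (v i k2 - p k2) ^ 2)

/-- The 8×8 moment matrix `M(p)` of the hexahedron: rows are the all-ones row, the
three coordinate rows of `V`, the three rows of the signed partial-distance matrix
`Δ(p)`, and the signed distance row `d(p)ᵀ`. -/
noncomputable def hexMomentMatrix (v : Fin 8 → EuclideanSpace ℝ (Fin 3))
    (p : EuclideanSpace ℝ (Fin 3)) : Matrix (Fin 8) (Fin 8) ℝ :=
  Matrix.of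
    ![fun _ => (1 : ℝ),
      fun i => v i 0,
      fun i => v i 1,
      fun i => v i 2,
      fun i => ![(1 : ℝ), -1, 1, -1, 1, -1, 1, -1] i * partialDist v p 1 2 i,
      fun i => ![(1 : ℝ), -1, -1, 1, -1, 1, 1, -1] i * partialDist v p 0 2 i,
      fun i => ![(1 : ℝ), 1, -1, -1, -1, -1, 1, 1] i * partialDist v p 0 1 i,
      fun i => ![(1 : ℝ), -1, 1, -1, -1, 1, -1, 1] i * ‖v i - p‖]

/-- Concavity of the square root: `z + √(x² + y² + z²) ≤ √(x² + z²) + √(y² + z²)`. -/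
lemma add_sqrt_le_sqrt_add_sqrt {z e f d x y : ℝ} (he : 0 ≤ e) (hf : 0 ≤ f)
    (he2 : e ^ 2 = x ^ 2 + z ^ 2) (hf2 : f ^ 2 = y ^ 2 + z ^ 2)
    (hd2 : d ^ 2 = x ^ 2 + y ^ 2 + z ^ 2) : z + d ≤ e + f := by
  have hprod : z * d ≤ e * f := by
    refine abs_le_of_sq_le_sq' ?_ (by positivity) |>.2
    rw [mul_pow, mul_pow, he2, hf2, hd2]
    nlinarith [sq_nonneg (x * y)]
  refine abs_le_of_sq_le_sq' ?_ (by positivity) |>.2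
  nlinarith

/-- Strict Hlawka inequality for three nonzero pairwise orthogonal vectors of norms `a`, `b`, `c`. -/
lemma hlawka_orthogonal {a b c d e f g : ℝ} (ha : 0 < a) (hb : 0 < b) (hc : 0 < c) (hd : 0 ≤ d)
    (he2 : e ^ 2 = b ^ 2 + c ^ 2) (hf2 : f ^ 2 = a ^ 2 + c ^ 2) (hg2 : g ^ 2 = a ^ 2 + b ^ 2)
    (hd2 : d ^ 2 = a ^ 2 + b ^ 2 + c ^ 2) : e + f + g < a + b + c + d := by
  have hbc : e < b + c := lt_of_pow_lt_pow_left₀ 2 (by positivity) (by nlinarith [mul_pos hb hc])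
  have hac : f < a + c := lt_of_pow_lt_pow_left₀ 2 (by positivity) (by nlinarith [mul_pos ha hc])
  have hab : g < a + b := lt_of_pow_lt_pow_left₀ 2 (by positivity) (by nlinarith [mul_pos ha hb])
  have hed : e ≤ d := le_of_sq_le_sq (by nlinarith) hd
  have hfd : f ≤ d := le_of_sq_le_sq (by nlinarith) hd
  have hgd : g ≤ d := le_of_sq_le_sq (by nlinarith) hd
  have hidentity : (a + b + c + d - (e + f + g)) * (a + b + c + d) =
      (b + c - e) * (a + (d - e)) + (a + c - f) * (b + (d - f)) + (a + b - g) * (c + (d - g)) := by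
    linear_combination hd2 - he2 - hf2 - hg2
  have hpos : 0 < (a + b + c + d - (e + f + g)) * (a + b + c + d) := by
    rw [hidentity]
    have h₁ := mul_pos (sub_pos.2 hbc) (add_pos_of_pos_of_nonneg ha (sub_nonneg.2 hed))
    have h₂ := mul_pos (sub_pos.2 hac) (add_pos_of_pos_of_nonneg hb (sub_nonneg.2 hfd))
    have h₃ := mul_pos (sub_pos.2 hab) (add_pos_of_pos_of_nonneg hc (sub_nonneg.2 hgd))
    linarith
  exact sub_pos.1 ((pos_iff_pos_of_mul_pos hpos).2 (by positivity))

/-- A function on the cube `{±1}³` with zero mean, given by its Fourier–Walsh coefficients. -/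
def walsh (y₁ y₂ y₃ z₁ z₂ z₃ w t₁ t₂ t₃ : ℝ) : ℝ :=
  y₁ * t₁ + y₂ * t₂ + y₃ * t₃ + z₁ * (t₂ * t₃) + z₂ * (t₁ * t₃) + z₃ * (t₁ * t₂) +
    w * (t₁ * t₂ * t₃)

/-- If a zero-mean function on the cube is maximal at `(1, 1, 1)`, then weighting its Walsh
coefficients there by norms of subvectors of a positive vector `(a, b, c)` gives a nonnegative
number, which vanishes only if the function does: the weighted sum is a positive combination of the
differences between the maximum and the averages over faces containing `(1, 1, 1)`. -/
lemma weighted_walsh_nonneg {y₁ y₂ y₃ z₁ z₂ z₃ w a b c d e f g : ℝ}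
    (hmax : ∀ t₁ t₂ t₃ : ℝ, t₁ ^ 2 = 1 → t₂ ^ 2 = 1 → t₃ ^ 2 = 1 →
      walsh y₁ y₂ y₃ z₁ z₂ z₃ w t₁ t₂ t₃ ≤ walsh y₁ y₂ y₃ z₁ z₂ z₃ w 1 1 1)
    (ha : 0 < a) (hb : 0 < b) (hc : 0 < c)
    (hd : 0 ≤ d) (he : 0 ≤ e) (hf : 0 ≤ f) (hg : 0 ≤ g)
    (he2 : e ^ 2 = b ^ 2 + c ^ 2) (hf2 : f ^ 2 = a ^ 2 + c ^ 2) (hg2 : g ^ 2 = a ^ 2 + b ^ 2)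
    (hd2 : d ^ 2 = a ^ 2 + b ^ 2 + c ^ 2) :
    0 ≤ y₁ * a + y₂ * b + y₃ * c + z₁ * e + z₂ * f + z₃ * g + w * d ∧
    (y₁ * a + y₂ * b + y₃ * c + z₁ * e + z₂ * f + z₃ * g + w * d ≤ 0 →
      y₁ = 0 ∧ y₂ = 0 ∧ y₃ = 0 ∧ z₁ = 0 ∧ z₂ = 0 ∧ z₃ = 0 ∧ w = 0) := by
  have h₁ := hmax (-1) 1 1 (by norm_num) (by norm_num) (by norm_num)
  have h₂ := hmax 1 (-1) 1 (by norm_num) (by norm_num) (by norm_num)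
  have h₃ := hmax 1 1 (-1) (by norm_num) (by norm_num) (by norm_num)
  have h₁₂ := hmax (-1) (-1) 1 (by norm_num) (by norm_num) (by norm_num)
  have h₁₃ := hmax (-1) 1 (-1) (by norm_num) (by norm_num) (by norm_num)
  have h₂₃ := hmax 1 (-1) (-1) (by norm_num) (by norm_num) (by norm_num)
  have h₁₂₃ := hmax (-1) (-1) (-1) (by norm_num) (by norm_num) (by norm_num)
  simp only [walsh] at h₁ h₂ h₃ h₁₂ h₁₃ h₂₃ h₁₂₃
  have hed : e ≤ d := le_of_sq_le_sq (by nlinarith) hd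
  have hfd : f ≤ d := le_of_sq_le_sq (by nlinarith) hd
  have hgd : g ≤ d := le_of_sq_le_sq (by nlinarith) hd
  have hc₁₂ : c + d ≤ f + e := add_sqrt_le_sqrt_add_sqrt hf he hf2 he2 hd2
  have hc₁₃ : b + d ≤ g + e :=
    add_sqrt_le_sqrt_add_sqrt (x := a) (y := c) hg he hg2 (by linarith) (by linarith)
  have hc₂₃ : a + d ≤ g + f :=
    add_sqrt_le_sqrt_add_sqrt (x := b) (y := c) hg hf (by linarith) (by linarith) (by linarith)
  have hc₁₂₃ := hlawka_orthogonal ha hb hc hd he2 hf2 hg2 hd2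
  have p₁ : 0 ≤ (d - e) * (y₁ + z₂ + z₃ + w) := mul_nonneg (by linarith) (by linarith)
  have p₂ : 0 ≤ (d - f) * (y₂ + z₁ + z₃ + w) := mul_nonneg (by linarith) (by linarith)
  have p₃ : 0 ≤ (d - g) * (y₃ + z₁ + z₂ + w) := mul_nonneg (by linarith) (by linarith)
  have p₁₂ : 0 ≤ (f + e - (c + d)) * (y₁ + y₂ + z₁ + z₂ + z₃ + w) :=
    mul_nonneg (by linarith) (by linarith)
  have p₁₃ : 0 ≤ (g + e - (b + d)) * (y₁ + y₃ + z₁ + z₂ + z₃ + w) :=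
    mul_nonneg (by linarith) (by linarith)
  have p₂₃ : 0 ≤ (g + f - (a + d)) * (y₂ + y₃ + z₁ + z₂ + z₃ + w) :=
    mul_nonneg (by linarith) (by linarith)
  have hsum : 0 ≤ y₁ + y₂ + y₃ + z₁ + z₂ + z₃ + w := by linarith
  have p₁₂₃ : 0 ≤ (a + b + c + d - (e + f + g)) * (y₁ + y₂ + y₃ + z₁ + z₂ + z₃ + w) :=
    mul_nonneg (by linarith) hsum
  refine ⟨by linarith, fun hle => ?_⟩
  have hzero : y₁ + y₂ + y₃ + z₁ + z₂ + z₃ + w = 0 :=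
    (mul_eq_zero.1 (le_antisymm (by linarith) p₁₂₃)).resolve_left (by linarith)
  refine ⟨?_, ?_, ?_, ?_, ?_, ?_, ?_⟩ <;> linarith

/-- `weighted_walsh_nonneg` with the maximum at an arbitrary vertex `(s₁, s₂, s₃)` of the cube and
a vector `(a, b, c)` in the corresponding open octant. -/
lemma weighted_walsh_nonneg_of_sign {y₁ y₂ y₃ z₁ z₂ z₃ w s₁ s₂ s₃ a b c d e f g : ℝ}
    (hs₁ : s₁ ^ 2 = 1) (hs₂ : s₂ ^ 2 = 1) (hs₃ : s₃ ^ 2 = 1)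
    (hmax : ∀ t₁ t₂ t₃ : ℝ, t₁ ^ 2 = 1 → t₂ ^ 2 = 1 → t₃ ^ 2 = 1 →
      walsh y₁ y₂ y₃ z₁ z₂ z₃ w t₁ t₂ t₃ ≤ walsh y₁ y₂ y₃ z₁ z₂ z₃ w s₁ s₂ s₃)
    (ha : 0 < s₁ * a) (hb : 0 < s₂ * b) (hc : 0 < s₃ * c)
    (hd : 0 ≤ d) (he : 0 ≤ e) (hf : 0 ≤ f) (hg : 0 ≤ g)
    (he2 : e ^ 2 = b ^ 2 + c ^ 2) (hf2 : f ^ 2 = a ^ 2 + c ^ 2) (hg2 : g ^ 2 = a ^ 2 + b ^ 2)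
    (hd2 : d ^ 2 = a ^ 2 + b ^ 2 + c ^ 2) :
    0 ≤ y₁ * a + y₂ * b + y₃ * c + z₁ * (s₂ * s₃ * e) + z₂ * (s₁ * s₃ * f) +
      z₃ * (s₁ * s₂ * g) + w * (s₁ * s₂ * s₃ * d) ∧
    (y₁ * a + y₂ * b + y₃ * c + z₁ * (s₂ * s₃ * e) + z₂ * (s₁ * s₃ * f) +
      z₃ * (s₁ * s₂ * g) + w * (s₁ * s₂ * s₃ * d) ≤ 0 →
      y₁ = 0 ∧ y₂ = 0 ∧ y₃ = 0 ∧ z₁ = 0 ∧ z₂ = 0 ∧ z₃ = 0 ∧ w = 0) := by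
  have hsq : ∀ {s : ℝ} (x : ℝ), s ^ 2 = 1 → (s * x) ^ 2 = x ^ 2 := fun x hs => by
    rw [mul_pow, hs, one_mul]
  have key := weighted_walsh_nonneg (y₁ := y₁ * s₁) (y₂ := y₂ * s₂) (y₃ := y₃ * s₃)
    (z₁ := z₁ * (s₂ * s₃)) (z₂ := z₂ * (s₁ * s₃)) (z₃ := z₃ * (s₁ * s₂)) (w := w * (s₁ * s₂ * s₃))
    (fun t₁ t₂ t₃ ht₁ ht₂ ht₃ => by
      have := hmax (s₁ * t₁) (s₂ * t₂) (s₃ * t₃) (by rw [hsq _ hs₁, ht₁]) (by rw [hsq _ hs₂, ht₂])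
        (by rw [hsq _ hs₃, ht₃])
      simp only [walsh] at this ⊢
      linarith)
    ha hb hc hd he hf hg (by rw [hsq _ hs₂, hsq _ hs₃, he2]) (by rw [hsq _ hs₁, hsq _ hs₃, hf2])
    (by rw [hsq _ hs₁, hsq _ hs₂, hg2]) (by rw [hsq _ hs₁, hsq _ hs₂, hsq _ hs₃, hd2])
  have hne₁ : s₁ ≠ 0 := by rintro rfl; norm_num at hs₁
  have hne₂ : s₂ ≠ 0 := by rintro rfl; norm_num at hs₂
  have hne₃ : s₃ ≠ 0 := by rintro rfl; norm_num at hs₃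
  have heq : y₁ * s₁ * (s₁ * a) + y₂ * s₂ * (s₂ * b) + y₃ * s₃ * (s₃ * c) + z₁ * (s₂ * s₃) * e +
      z₂ * (s₁ * s₃) * f + z₃ * (s₁ * s₂) * g + w * (s₁ * s₂ * s₃) * d =
      y₁ * a + y₂ * b + y₃ * c + z₁ * (s₂ * s₃ * e) + z₂ * (s₁ * s₃ * f) +
      z₃ * (s₁ * s₂ * g) + w * (s₁ * s₂ * s₃ * d) := by
    linear_combination y₁ * a * hs₁ + y₂ * b * hs₂ + y₃ * c * hs₃
  rw [heq] at key
  simpa [hne₁, hne₂, hne₃] using key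

lemma exists_hexSign_eq {t₁ t₂ t₃ : ℝ} (h₁ : t₁ ^ 2 = 1) (h₂ : t₂ ^ 2 = 1) (h₃ : t₃ ^ 2 = 1) :
    ∃ i, hexSign 0 i = t₁ ∧ hexSign 1 i = t₂ ∧ hexSign 2 i = t₃ := by
  rw [← one_pow 2, sq_eq_sq_iff_eq_or_eq_neg] at h₁ h₂ h₃
  rcases h₁ with rfl | rfl <;> rcases h₂ with rfl | rfl <;> rcases h₃ with rfl | rfl
  exacts [⟨0, by simp [hexSign]⟩, ⟨1, by simp [hexSign]⟩, ⟨3, by simp [hexSign]⟩,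
    ⟨2, by simp [hexSign]⟩, ⟨4, by simp [hexSign]⟩, ⟨5, by simp [hexSign]⟩,
    ⟨7, by simp [hexSign]⟩, ⟨6, by simp [hexSign]⟩]

lemma hexSign_sq (k : Fin 3) (i : Fin 8) : hexSign k i ^ 2 = 1 := by
  fin_cases k <;> fin_cases i <;> norm_num [hexSign]

lemma vecMul_hexMomentMatrix (v : Fin 8 → EuclideanSpace ℝ (Fin 3))
    (p : EuclideanSpace ℝ (Fin 3)) (z : Fin 8 → ℝ) (i : Fin 8) :
    (z ᵥ* hexMomentMatrix v p) i = z ⬝ᵥ ![1, p 0, p 1, p 2, 0, 0, 0, 0] +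
      (z 1 * (v i 0 - p 0) + z 2 * (v i 1 - p 1) + z 3 * (v i 2 - p 2) +
        z 4 * (hexSign 1 i * hexSign 2 i * partialDist v p 1 2 i) +
        z 5 * (hexSign 0 i * hexSign 2 i * partialDist v p 0 2 i) +
        z 6 * (hexSign 0 i * hexSign 1 i * partialDist v p 0 1 i) +
        z 7 * (hexSign 0 i * hexSign 1 i * hexSign 2 i * ‖v i - p‖)) := by
  fin_cases i <;>
    simp [vecMul, dotProduct, Fin.sum_univ_eight, hexMomentMatrix, hexSign] <;> ring

/-- Every linear combination of the rows of the moment matrix has an entry at least as large as the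
same combination of the right-hand side, strictly so unless it only involves the row of ones. -/
lemma exists_le_vecMul_hexMomentMatrix (v : Fin 8 → EuclideanSpace ℝ (Fin 3))
    (p : EuclideanSpace ℝ (Fin 3)) (hnz : ∀ (k : Fin 3) (i : Fin 8), v i k - p k ≠ 0)
    (hsgn : ∀ (k : Fin 3) (i : Fin 8), Real.sign (v i k - p k) = hexSign k i) (z : Fin 8 → ℝ) :
    ∃ i, z ⬝ᵥ ![1, p 0, p 1, p 2, 0, 0, 0, 0] ≤ (z ᵥ* hexMomentMatrix v p) i ∧
      ((z ᵥ* hexMomentMatrix v p) i ≤ z ⬝ᵥ ![1, p 0, p 1, p 2, 0, 0, 0, 0] →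
        z 1 = 0 ∧ z 2 = 0 ∧ z 3 = 0 ∧ z 4 = 0 ∧ z 5 = 0 ∧ z 6 = 0 ∧ z 7 = 0) := by
  obtain ⟨i, hi⟩ := Finite.exists_max fun j =>
    walsh (z 1) (z 2) (z 3) (z 4) (z 5) (z 6) (z 7) (hexSign 0 j) (hexSign 1 j) (hexSign 2 j)
  have hpos : ∀ k, 0 < hexSign k i * (v i k - p k) := fun k => by
    rw [← hsgn]
    exact Real.sign_mul_pos_of_ne_zero _ (hnz k i)
  have key := weighted_walsh_nonneg_of_sign (hexSign_sq 0 i) (hexSign_sq 1 i) (hexSign_sq 2 i)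
    (fun t₁ t₂ t₃ h₁ h₂ h₃ => by
      obtain ⟨j, rfl, rfl, rfl⟩ := exists_hexSign_eq h₁ h₂ h₃
      exact hi j)
    (hpos 0) (hpos 1) (hpos 2) (norm_nonneg (v i - p)) (Real.sqrt_nonneg _) (Real.sqrt_nonneg _)
    (Real.sqrt_nonneg _) (Real.sq_sqrt (by positivity)) (Real.sq_sqrt (by positivity))
    (Real.sq_sqrt (by positivity)) (by simp [EuclideanSpace.norm_sq_eq, Fin.sum_univ_three])
  refine ⟨i, ?_⟩
  rw [vecMul_hexMomentMatrix]
  exact ⟨le_add_of_nonneg_right key.1, fun h => key.2 (by simpa [partialDist] using h)⟩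

/-- Let `v₁,…,v₈ ∈ ℝ³`, let `p` lie in their convex hull, and assume every
entry of `V - p𝟙ᵀ` is nonzero with the prescribed sign pattern. Then the linear system
`M(p)φ = (1, p₁, p₂, p₃, 0, 0, 0, 0)` has a unique solution `φ ∈ ℝ⁸`, and this solution
is componentwise nonnegative. -/
theorem hex_moment_coordinates (v : Fin 8 → EuclideanSpace ℝ (Fin 3))
    (p : EuclideanSpace ℝ (Fin 3)) (hp : p ∈ convexHull ℝ (Set.range v))
    (hnz : ∀ (k : Fin 3) (i : Fin 8), v i k - p k ≠ 0)
    (hsgn : ∀ (k : Fin 3) (i : Fin 8), Real.sign (v i k - p k) = hexSign k i) :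
    (∃! φ : Fin 8 → ℝ,
        (hexMomentMatrix v p).mulVec φ = ![1, p 0, p 1, p 2, 0, 0, 0, 0]) ∧
    ∀ φ : Fin 8 → ℝ,
      (hexMomentMatrix v p).mulVec φ = ![1, p 0, p 1, p 2, 0, 0, 0, 0] →
      ∀ i, 0 ≤ φ i := by
  set M := hexMomentMatrix v p with hM
  set r : Fin 8 → ℝ := ![1, p 0, p 1, p 2, 0, 0, 0, 0] with hr
  have hex := exists_le_vecMul_hexMomentMatrix v p hnz hsgn
  have hker : ∀ z : Fin 8 → ℝ, z ᵥ* M = 0 → z = 0 := by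
    intro z hz
    obtain ⟨i, hi, hi'⟩ := hex z
    obtain ⟨j, hj, -⟩ := hex (-z)
    rw [← hM, ← hr] at hi hi' hj
    rw [neg_vecMul, neg_dotProduct, hz] at hj
    rw [hz] at hi hi'
    simp only [Pi.zero_apply, Pi.neg_apply, neg_zero, Left.neg_nonpos_iff] at hi hi' hj
    obtain ⟨h1, h2, h3, h4, h5, h6, h7⟩ := hi' hj
    have h0 : z ⬝ᵥ r = 0 := le_antisymm hi hj
    simp [hr, dotProduct, Fin.sum_univ_eight, h1, h2, h3] at h0
    ext k
    fin_cases k <;> assumption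
  have hunit : IsUnit M := vecMul_injective_iff_isUnit.1 <|
    (injective_iff_map_eq_zero M.vecMulLinear).2 hker
  refine ⟨Function.Bijective.existsUnique
    ⟨mulVec_injective_iff_isUnit.2 hunit, mulVec_surjective_iff_isUnit.2 hunit⟩ r, fun φ hφ j => ?_⟩
  obtain ⟨z, hz : z ᵥ* M = _⟩ := vecMul_surjective_iff_isUnit.2 hunit (-Pi.single j 1)
  obtain ⟨i, hi, -⟩ := hex z
  rw [← hM, ← hr, hz, ← hφ, dotProduct_mulVec, hz] at hi
  have : (-Pi.single j 1 : Fin 8 → ℝ) i ≤ 0 := by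
    simpa using (Pi.single_nonneg.2 zero_le_one : (0 : Fin 8 → ℝ) ≤ Pi.single j 1) i
  rw [neg_dotProduct, single_one_dotProduct] at hi
  linarith
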